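/- Let w₁, w₂ ≥ 0 with w₁ + w₂ > 0. In every weighted two-player congestion game with weights w₁, w₂ and proportional costs, every subgame-perfect outcome A (with either player moving first) and every action profile B satisfy C(A) ≤ (1 + w₁·w₂/(w₁² + w₂²)) · C(B). -/

import Mathlib

open Finset Real

/-- A weighted two-player congestion game with weights `w₁, w₂`:
a finite set of resources `Fin n`, nonempty finite collections of actions
(subsets of resources) for each player, and nonnegative affine cost
coefficients `α r`, `β r` for each resource. -/
structure CGame (w₁ w₂ : ℝ) where
  n : ℕ
  A1 : Finset (Finset (Fin n))
  A2 : Finset (Finset (Fin n))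
  A1_nonempty : A1.Nonempty
  A2_nonempty : A2.Nonempty
  α : Fin n → ℝ
  β : Fin n → ℝ
  α_nonneg : ∀ r, 0 ≤ α r
  β_nonneg : ∀ r, 0 ≤ β r

namespace CGame

variable {w₁ w₂ : ℝ}

/-- The load of resource `r` under the action profile `(a₁, a₂)`. -/
def load (G : CGame w₁ w₂) (a₁ a₂ : Finset (Fin G.n)) (r : Fin G.n) : ℝ :=
  (if r ∈ a₁ then w₁ else 0) + (if r ∈ a₂ then w₂ else 0)

/-- Uniform cost of player 1. -/
def C1uni (G : CGame w₁ w₂) (a₁ a₂ : Finset (Fin G.n)) : ℝ :=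
  ∑ r ∈ a₁, (G.α r + G.β r * G.load a₁ a₂ r)

/-- Uniform cost of player 2. -/
def C2uni (G : CGame w₁ w₂) (a₁ a₂ : Finset (Fin G.n)) : ℝ :=
  ∑ r ∈ a₂, (G.α r + G.β r * G.load a₁ a₂ r)

/-- Uniform social cost. -/
def Cuni (G : CGame w₁ w₂) (a₁ a₂ : Finset (Fin G.n)) : ℝ :=
  G.C1uni a₁ a₂ + G.C2uni a₁ a₂

/-- Proportional cost of player 1. -/
def C1prop (G : CGame w₁ w₂) (a₁ a₂ : Finset (Fin G.n)) : ℝ :=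
  w₁ * ∑ r ∈ a₁, (G.α r + G.β r * G.load a₁ a₂ r)

/-- Proportional cost of player 2. -/
def C2prop (G : CGame w₁ w₂) (a₁ a₂ : Finset (Fin G.n)) : ℝ :=
  w₂ * ∑ r ∈ a₂, (G.α r + G.β r * G.load a₁ a₂ r)

/-- Proportional social cost. -/
def Cprop (G : CGame w₁ w₂) (a₁ a₂ : Finset (Fin G.n)) : ℝ :=
  G.C1prop a₁ a₂ + G.C2prop a₁ a₂

/-- `(a₁, a₂)` is an action profile: each action is admissible for its player. -/
def IsProfile (G : CGame w₁ w₂) (a₁ a₂ : Finset (Fin G.n)) : Prop :=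
  a₁ ∈ G.A1 ∧ a₂ ∈ G.A2

/-- The game is symmetric if both players have the same actions. -/
def Symm (G : CGame w₁ w₂) : Prop := G.A1 = G.A2

/-- Pure Nash equilibrium for uniform costs. -/
def IsNashUni (G : CGame w₁ w₂) (a₁ a₂ : Finset (Fin G.n)) : Prop :=
  G.IsProfile a₁ a₂ ∧
  (∀ b₁ ∈ G.A1, G.C1uni a₁ a₂ ≤ G.C1uni b₁ a₂) ∧
  (∀ b₂ ∈ G.A2, G.C2uni a₁ a₂ ≤ G.C2uni a₁ b₂)

/-- Pure Nash equilibrium for proportional costs. -/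
def IsNashProp (G : CGame w₁ w₂) (a₁ a₂ : Finset (Fin G.n)) : Prop :=
  G.IsProfile a₁ a₂ ∧
  (∀ b₁ ∈ G.A1, G.C1prop a₁ a₂ ≤ G.C1prop b₁ a₂) ∧
  (∀ b₂ ∈ G.A2, G.C2prop a₁ a₂ ≤ G.C2prop a₁ b₂)

/-- Subgame-perfect outcome with player 1 moving first, uniform costs. -/
def IsSPE1Uni (G : CGame w₁ w₂) (a₁ a₂ : Finset (Fin G.n)) : Prop :=
  G.IsProfile a₁ a₂ ∧
  ∃ b : Finset (Fin G.n) → Finset (Fin G.n),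
    (∀ x ∈ G.A1, b x ∈ G.A2) ∧
    (∀ x ∈ G.A1, ∀ y ∈ G.A2, G.C2uni x (b x) ≤ G.C2uni x y) ∧
    a₂ = b a₁ ∧
    (∀ x ∈ G.A1, G.C1uni a₁ a₂ ≤ G.C1uni x (b x))

/-- Subgame-perfect outcome with player 2 moving first, uniform costs. -/
def IsSPE2Uni (G : CGame w₁ w₂) (a₁ a₂ : Finset (Fin G.n)) : Prop :=
  G.IsProfile a₁ a₂ ∧
  ∃ b : Finset (Fin G.n) → Finset (Fin G.n),
    (∀ x ∈ G.A2, b x ∈ G.A1) ∧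
    (∀ x ∈ G.A2, ∀ y ∈ G.A1, G.C1uni (b x) x ≤ G.C1uni y x) ∧
    a₁ = b a₂ ∧
    (∀ x ∈ G.A2, G.C2uni a₁ a₂ ≤ G.C2uni (b x) x)

/-- Subgame-perfect outcome with player 1 moving first, proportional costs. -/
def IsSPE1Prop (G : CGame w₁ w₂) (a₁ a₂ : Finset (Fin G.n)) : Prop :=
  G.IsProfile a₁ a₂ ∧
  ∃ b : Finset (Fin G.n) → Finset (Fin G.n),
    (∀ x ∈ G.A1, b x ∈ G.A2) ∧
    (∀ x ∈ G.A1, ∀ y ∈ G.A2, G.C2prop x (b x) ≤ G.C2prop x y) ∧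
    a₂ = b a₁ ∧
    (∀ x ∈ G.A1, G.C1prop a₁ a₂ ≤ G.C1prop x (b x))

/-- Subgame-perfect outcome with player 2 moving first, proportional costs. -/
def IsSPE2Prop (G : CGame w₁ w₂) (a₁ a₂ : Finset (Fin G.n)) : Prop :=
  G.IsProfile a₁ a₂ ∧
  ∃ b : Finset (Fin G.n) → Finset (Fin G.n),
    (∀ x ∈ G.A2, b x ∈ G.A1) ∧
    (∀ x ∈ G.A2, ∀ y ∈ G.A1, G.C1prop (b x) x ≤ G.C1prop y x) ∧
    a₁ = b a₂ ∧
    (∀ x ∈ G.A2, G.C2prop a₁ a₂ ≤ G.C2prop (b x) x)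

end CGame

namespace CGame

variable {w₁ w₂ : ℝ}

/-- The proportional cost of player 1 as a sum over all resources. -/
lemma C1prop_eq_sum (G : CGame w₁ w₂) (a₁ a₂ : Finset (Fin G.n)) :
    G.C1prop a₁ a₂ =
      ∑ r, if r ∈ a₁ then w₁ * (G.α r + G.β r * G.load a₁ a₂ r) else 0 := by
  rw [C1prop, Finset.mul_sum, Finset.sum_ite_mem, Finset.univ_inter]

/-- The proportional cost of player 2 as a sum over all resources. -/
lemma C2prop_eq_sum (G : CGame w₁ w₂) (a₁ a₂ : Finset (Fin G.n)) :
    G.C2prop a₁ a₂ =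
      ∑ r, if r ∈ a₂ then w₂ * (G.α r + G.β r * G.load a₁ a₂ r) else 0 := by
  rw [C2prop, Finset.mul_sum, Finset.sum_ite_mem, Finset.univ_inter]

/-- The smoothness inequality behind the sequential bound: `c` plays the role of
the reply of player 2 to the deviation `b₁` of player 1. -/
lemma smoothness_prop (G : CGame w₁ w₂) (h₁ : 0 ≤ w₁) (h₂ : 0 ≤ w₂) {k : ℝ} (hk : 0 ≤ k)
    (hkw : k * (w₁ ^ 2 + w₂ ^ 2) = w₁ * w₂) (a₁ a₂ b₁ b₂ c : Finset (Fin G.n)) :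
    (1 + k) * G.C1prop b₁ c + G.C2prop a₁ c ≤
      (1 + k) * G.C1prop b₁ b₂ + k * G.C1prop a₁ a₂ + (1 + k) * G.C2prop b₁ c := by
  simp only [C1prop_eq_sum, C2prop_eq_sum, Finset.mul_sum, ← Finset.sum_add_distrib]
  refine Finset.sum_le_sum fun r _ => ?_
  have hα := G.α_nonneg r
  have hβ := G.β_nonneg r
  have hkα₁ : 0 ≤ k * (w₁ * G.α r) := by positivity
  have hkα₂ : 0 ≤ k * (w₂ * G.α r) := by positivity
  have hβ₁₂ : 0 ≤ G.β r * (w₁ * w₂) := by positivity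
  have hkβ₁₂ : 0 ≤ k * (G.β r * (w₁ * w₂)) := by positivity
  have hkβ₁ : 0 ≤ k * (G.β r * w₁ ^ 2) := by positivity
  have hkβ₂ : 0 ≤ k * (G.β r * w₂ ^ 2) := by positivity
  have hkey : G.β r * (k * (w₁ ^ 2 + w₂ ^ 2)) = G.β r * (w₁ * w₂) := by rw [hkw]
  simp only [load]
  split_ifs <;> linarith

/-- The bound on the cost of subgame-perfect outcomes with player 1 moving first. -/
lemma IsSPE1Prop.Cprop_le {G : CGame w₁ w₂} {a₁ a₂ b₁ b₂ : Finset (Fin G.n)}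
    (hA : G.IsSPE1Prop a₁ a₂) (h₁ : 0 ≤ w₁) (h₂ : 0 ≤ w₂) (hsum : 0 < w₁ + w₂)
    (hB : G.IsProfile b₁ b₂) :
    G.Cprop a₁ a₂ ≤ (1 + w₁ * w₂ / (w₁ ^ 2 + w₂ ^ 2)) * G.Cprop b₁ b₂ := by
  obtain ⟨⟨ha₁, -⟩, f, hf, hreply, rfl, hlead⟩ := hA
  have hpos : 0 < w₁ ^ 2 + w₂ ^ 2 := by nlinarith [sq_nonneg (w₁ - w₂)]
  have hk : 0 ≤ w₁ * w₂ / (w₁ ^ 2 + w₂ ^ 2) := by positivity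
  have hkw : w₁ * w₂ / (w₁ ^ 2 + w₂ ^ 2) * (w₁ ^ 2 + w₂ ^ 2) = w₁ * w₂ :=
    div_mul_cancel₀ _ hpos.ne'
  have hsmooth := G.smoothness_prop h₁ h₂ hk hkw a₁ (f a₁) b₁ b₂ (f b₁)
  generalize w₁ * w₂ / (w₁ ^ 2 + w₂ ^ 2) = k at *
  have hk1 : 0 ≤ 1 + k := by linarith
  have hlead' := mul_le_mul_of_nonneg_left (hlead b₁ hB.1) hk1
  have hreply' := mul_le_mul_of_nonneg_left (hreply b₁ hB.1 b₂ hB.2) hk1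
  have hstay := hreply a₁ ha₁ (f b₁) (hf b₁ hB.1)
  simp only [Cprop]
  linarith

/-- The game with the roles of the two players exchanged. -/
def swap (G : CGame w₁ w₂) : CGame w₂ w₁ where
  n := G.n
  A1 := G.A2
  A2 := G.A1
  A1_nonempty := G.A2_nonempty
  A2_nonempty := G.A1_nonempty
  α := G.α
  β := G.β
  α_nonneg := G.α_nonneg
  β_nonneg := G.β_nonneg

lemma swap_load (G : CGame w₁ w₂) (a₁ a₂ : Finset (Fin G.n)) (r : Fin G.n) :
    G.swap.load a₂ a₁ r = G.load a₁ a₂ r :=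
  add_comm _ _

lemma swap_C1prop (G : CGame w₁ w₂) (a₁ a₂ : Finset (Fin G.n)) :
    G.swap.C1prop a₂ a₁ = G.C2prop a₁ a₂ :=
  congrArg (w₂ * ·) (Finset.sum_congr rfl fun r _ =>
    congrArg (fun x => G.α r + G.β r * x) (G.swap_load a₁ a₂ r))

lemma swap_C2prop (G : CGame w₁ w₂) (a₁ a₂ : Finset (Fin G.n)) :
    G.swap.C2prop a₂ a₁ = G.C1prop a₁ a₂ :=
  (G.swap.swap_C1prop a₂ a₁).symm

lemma swap_Cprop (G : CGame w₁ w₂) (a₁ a₂ : Finset (Fin G.n)) :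
    G.swap.Cprop a₂ a₁ = G.Cprop a₁ a₂ :=
  (congrArg₂ (· + ·) (G.swap_C1prop a₁ a₂) (G.swap_C2prop a₁ a₂)).trans (add_comm _ _)

lemma IsSPE2Prop.swap {G : CGame w₁ w₂} {a₁ a₂ : Finset (Fin G.n)}
    (hA : G.IsSPE2Prop a₁ a₂) : G.swap.IsSPE1Prop a₂ a₁ := by
  obtain ⟨hP, f, hf, hreply, hfa, hlead⟩ := hA
  refine ⟨hP.symm, f, hf, fun x hx y hy => ?_, hfa, fun x hx => ?_⟩
  · exact (G.swap_C2prop _ _).trans_le ((hreply x hx y hy).trans_eq (G.swap_C2prop _ _).symm)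
  · exact (G.swap_C1prop _ _).trans_le ((hlead x hx).trans_eq (G.swap_C1prop _ _).symm)

end CGame

/-- sequential price of anarchy upper bound for proportionally
weighted two-player congestion games with weights `w₁, w₂`. -/
theorem poa_seq_prop_upper (w₁ w₂ : ℝ) (h₁ : 0 ≤ w₁) (h₂ : 0 ≤ w₂)
    (hsum : 0 < w₁ + w₂) (G : CGame w₁ w₂) (a₁ a₂ b₁ b₂ : Finset (Fin G.n))
    (hA : G.IsSPE1Prop a₁ a₂ ∨ G.IsSPE2Prop a₁ a₂) (hB : G.IsProfile b₁ b₂) :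
    G.Cprop a₁ a₂ ≤
      (1 + w₁ * w₂ / (w₁ ^ 2 + w₂ ^ 2)) * G.Cprop b₁ b₂ := by
  obtain hA | hA := hA
  · exact hA.Cprop_le h₁ h₂ hsum hB
  · have h := CGame.IsSPE1Prop.Cprop_le (G := G.swap) (b₁ := b₂) (b₂ := b₁) hA.swap h₂ h₁
      (by linarith) hB.symm
    rwa [G.swap_Cprop, G.swap_Cprop, mul_comm w₂ w₁, add_comm (w₂ ^ 2)] at h
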